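/- Let B ⊆ A be a set of actions of a CTS and q a state. If B is semi-→-stubborn at q (sst→_q(B), using right-commutativity as the ⋆-commutativity), q →β q' for some action β ∉ B, and β does not disable any stubborn action enabled at q, i.e., en(q) ∩ B ⊆ en(q') ∩ B, then B is semi-→-stubborn at q' (sst→_{q'}(B)). -/

import Mathlib

/-!
Firing an action outside `B` cannot enable an action of `B` that was disabled: such an action has
a necessary enabling set inside `B`, which the one-step path of the fired action would have to
meet. Since by assumption no action of `B` gets disabled either, the enabled actions of `B` are the
same in both states, so (D2) carries over. For (D1), a necessary enabling set contained in `B`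
remains one after the step, because prefixing a path with an action outside `B` does not affect
whether the path meets that set.
-/

namespace TRF

/-- Phases of a transaction: external (N), pre-phase (R), post-phase (L). -/
inductive Phase : Type
  | N | R | L
deriving DecidableEq

/-- A concurrent transition system (CTS) over states `X`, actions `A` and
processes `P`.  The partition `A = ⨄ A_i` is given by the map `proc`
assigning to each action the (unique) process it belongs to. -/
structure CTS (X A P : Type) where
  T : X → A → X → Prop
  proc : A → P
  q0 : X

variable {X A P : Type}

/-- Sequential composition of binary relations. -/
def RComp {S : Type _} (r s : S → S → Prop) : S → S → Prop :=
  fun x z => ∃ y, r x y ∧ s y z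

namespace CTS

/-- The relation `→α`. -/
def rel (S : CTS X A P) (α : A) : X → X → Prop := fun q q' => S.T q α q'

/-- The relation `→_i` (union of `→α` over `α ∈ A_i`). -/
def stepOf (S : CTS X A P) (i : P) : X → X → Prop :=
  fun q q' => ∃ α, S.proc α = i ∧ S.T q α q'

/-- The relation `→` (union of all `→α`). -/
def step (S : CTS X A P) : X → X → Prop := fun q q' => ∃ α, S.T q α q'

/-- The enabled actions at `q`. -/
def en (S : CTS X A P) (q : X) : Set A := {α | ∃ q', S.T q α q'}

/-- Reachability from the initial state. -/
def Reach (S : CTS X A P) (q : X) : Prop := Relation.ReflTransGen S.step S.q0 q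

/-- `α` right-commutes with `β`:  `→α ∘ →β ⊆ →β ∘ →α`. -/
def RightComm (S : CTS X A P) (α β : A) : Prop :=
  ∀ x z, RComp (S.rel α) (S.rel β) x z → RComp (S.rel β) (S.rel α) x z

/-- `α` left-commutes with `β`:  `→α ∘ →β ⊇ →β ∘ →α`. -/
def LeftComm (S : CTS X A P) (α β : A) : Prop :=
  ∀ x z, RComp (S.rel β) (S.rel α) x z → RComp (S.rel α) (S.rel β) x z

/-- `α` and `β` strongly commute:  `c ◁ (→α ∘ →β) = c ◁ (→β ∘ →α)` where
`c` is the set of states where both are enabled. -/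
def StrongComm (S : CTS X A P) (α β : A) : Prop :=
  ∀ x z, α ∈ S.en x → β ∈ S.en x →
    (RComp (S.rel α) (S.rel β) x z ↔ RComp (S.rel β) (S.rel α) x z)

/-- Finite paths, labelled by a list of actions. -/
def Path (S : CTS X A P) : X → List A → X → Prop
  | q, [], q'' => q = q''
  | q, a :: as, q'' => ∃ q', S.T q a q' ∧ S.Path q' as q''

/-- `E` is a necessary enabling set (NES) for `α` at `q1`. -/
def IsNES (S : CTS X A P) (α : A) (q1 : X) (E : Set A) : Prop :=
  ∀ (as : List A) (qn : X), S.Path q1 as qn → α ∉ S.en q1 → α ∈ S.en qn →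
    ∃ β ∈ E, β ∈ as

end CTS

/-- The three commutativity modes ←, →, ↔. -/
inductive StarMode : Type
  | left | right | strong

/-- ⋆-commutativity. -/
def CTS.StarComm (S : CTS X A P) : StarMode → A → A → Prop
  | .left => S.LeftComm
  | .right => S.RightComm
  | .strong => S.StrongComm

/-- `B` is semi-⋆-stubborn at `q` (conditions D1 and D2). -/
def CTS.SemiStubborn (S : CTS X A P) (st : StarMode) (q : X) (B : Set A) : Prop :=
  (∀ α ∈ B, α ∉ S.en q → ∃ E, S.IsNES α q E ∧ E ⊆ B) ∧
  (∀ α ∈ B, α ∈ S.en q → ∀ β, ¬ S.StarComm st α β → β ∈ B)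

/-- `B` is ⋆-stubborn at `q` (additionally condition D0). -/
def CTS.Stubborn (S : CTS X A P) (st : StarMode) (q : X) (B : Set A) : Prop :=
  S.SemiStubborn st q B ∧ ((S.en q).Nonempty → (B ∩ S.en q).Nonempty)

/-- Process `i` is dynamically left-moving at `q`. -/
def CTS.lmv (S : CTS X A P) (i : P) (q : X) : Prop :=
  ∃ B : Set A, S.SemiStubborn .left q B ∧ B ∩ S.en q = {a | S.proc a = i} ∩ S.en q

/-- The transition `(q,α,q')` of process `i` is dynamically right-moving. -/
def CTS.rmv (S : CTS X A P) (i : P) (q : X) (α : A) (q' : X) : Prop :=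
  ∃ B : Set A, S.SemiStubborn .right q B ∧ α ∈ B ∧
    B ∩ S.en q' ⊆ {a | S.proc a = i} ∧ B ∩ S.en q = {α}

/-- The set `A⊖` of actions that can disable `Y`. -/
def Aminus (S : CTS X A P) (Y : Set X) : Set A :=
  {α | ∃ q ∈ Y, ∃ q', q' ∉ Y ∧ S.T q α q'}

/-- The set `A⊕` of actions that can enable `Y`. -/
def Aplus (S : CTS X A P) (Y : Set X) : Set A :=
  {α | ∃ q, q ∉ Y ∧ ∃ q' ∈ Y, S.T q α q'}

/-- Phase vectors `H = {N,R,L}^P`. -/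
abbrev HVec (P : Type) := P → Phase

/-- The initial phase vector (all external). -/
def h0 (P : Type) : HVec P := fun _ => Phase.N

/-- The transition relation `T'_i` of the transaction system. -/
def TStep (S : CTS X A P) (Y : Set X) (i : P) :
    X × HVec P → A → X × HVec P → Prop :=
  fun s α s' =>
    S.T s.1 α s'.1 ∧ S.proc α = i ∧ (∀ j, j ≠ i → s'.2 j = s.2 j) ∧
    (s'.2 i = Phase.R ↔ (s.2 i ≠ Phase.L ∧ S.rmv i s.1 α s'.1 ∧ α ∉ Aminus S Y)) ∧
    (s'.2 i = Phase.L → (S.lmv i s'.1 ∧ S.en s'.1 ∩ {a | S.proc a = i} ∩ Aplus S Y = ∅))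

/-- The transaction system CTS' of a CTS. -/
def TSys (S : CTS X A P) (Y : Set X) : CTS (X × HVec P) A P where
  T := fun s α s' => TStep S Y (S.proc α) s α s'
  proc := S.proc
  q0 := (S.q0, h0 P)

/-- States whose `i`-phase is external. -/
def Npart (i : P) : Set (X × HVec P) := {s | s.2 i = Phase.N}

/-- States whose `i`-phase is the pre-phase. -/
def Rpart (i : P) : Set (X × HVec P) := {s | s.2 i = Phase.R}

/-- States whose `i`-phase is the post-phase. -/
def Lpart (i : P) : Set (X × HVec P) := {s | s.2 i = Phase.L}

/-- Generic `↪_i = (⋂_{j≠i} N_j) ◁ →_i`. -/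
def hookG {S : Type _} (stepOf : P → S → S → Prop) (Np : P → Set S) (i : P) : S → S → Prop :=
  fun q q' => (∀ j, j ≠ i → q ∈ Np j) ∧ stepOf i q q'

/-- Generic `⇒_i = N_i ◁ ((↪_i ▷ co-N_i)^* ∘ (↪_i ▷ N_i))`. -/
def rstepG {S : Type _} (stepOf : P → S → S → Prop) (Np : P → Set S) (i : P) : S → S → Prop :=
  fun q q'' => q ∈ Np i ∧
    RComp (Relation.ReflTransGen (fun a b => hookG stepOf Np i a b ∧ b ∉ Np i))
          (fun a b => hookG stepOf Np i a b ∧ b ∈ Np i) q q''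

/-- `↪_i` for the transaction system. -/
def hook (S : CTS X A P) (Y : Set X) (i : P) : X × HVec P → X × HVec P → Prop :=
  hookG (TSys S Y).stepOf (fun j => Npart j) i

/-- `⇒_i` for the transaction system. -/
def rstep (S : CTS X A P) (Y : Set X) (i : P) : X × HVec P → X × HVec P → Prop :=
  rstepG (TSys S Y).stepOf (fun j => Npart j) i

/-- Reachability in the reduced transaction system (RTS). -/
def ReachRTS (S : CTS X A P) (Y : Set X) (s : X × HVec P) : Prop :=
  Relation.ReflTransGen (fun a b => ∃ i, rstep S Y i a b) (S.q0, h0 P) s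

/-- Thread bisimulation: an equivalence relation that transfers `→_i`-steps. -/
def CTS.ThreadBisim (S : CTS X A P) (R : X → X → Prop) : Prop :=
  Equivalence R ∧
  ∀ (i : P) (q q' q1 : X), R q q' → S.stepOf i q q1 → ∃ q1', S.stepOf i q' q1' ∧ R q1 q1'

/-- The phase-forgetting relation `≅_i` on transaction-system states. -/
def phEq (i : P) : (X × HVec P) → (X × HVec P) → Prop :=
  fun s s' => s.1 = s'.1 ∧ ∀ j, j ≠ i → s.2 j = s'.2 j

/-- `≅_Z`: transitive closure of the union of the `≅_i` for `i ∈ Z`. -/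
def phEqZ (Z : Set P) : (X × HVec P) → (X × HVec P) → Prop :=
  Relation.TransGen (fun a b => ∃ k ∈ Z, phEq k a b)

/-- Right restriction `r ▷ W`. -/
def restR {S : Type _} (r : S → S → Prop) (W : Set S) : S → S → Prop :=
  fun x y => r x y ∧ y ∈ W

/-- Left restriction `W ◁ r`. -/
def restL {S : Type _} (W : Set S) (r : S → S → Prop) : S → S → Prop :=
  fun x y => x ∈ W ∧ r x y

/-- `r` right-commutes with `s` up to `e`:  `r ∘ s ∘ e ⊆ s ∘ r ∘ e`. -/
def RightCommUpTo {S : Type _} (r s e : S → S → Prop) : Prop :=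
  ∀ x z, RComp r (RComp s e) x z → RComp s (RComp r e) x z

/-- `r` left-commutes with `s` up to `e`:  `r ∘ s ∘ e ⊇ s ∘ r ∘ e`. -/
def LeftCommUpTo {S : Type _} (r s e : S → S → Prop) : Prop :=
  ∀ x z, RComp s (RComp r e) x z → RComp r (RComp s e) x z

/-- a semi-→-stubborn set stays semi-→-stubborn after firing an
action outside of it, provided that action disables no enabled stubborn
action (`en(q) ∩ B ⊆ en(q') ∩ B`). -/
theorem semiStubborn_right_invariant {X A P : Type} [Finite A] [Finite P]
    (S : CTS X A P) (B : Set A) (q q' : X) (β : A)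
    (hst : S.SemiStubborn StarMode.right q B) (hβ : β ∉ B) (hstep : S.T q β q')
    (hen : S.en q ∩ B ⊆ S.en q' ∩ B) :
    S.SemiStubborn StarMode.right q' B := by
  obtain ⟨hD1, hD2⟩ := hst
  refine ⟨fun α hα hdis => ?_, fun α hα hαen => ?_⟩
  · -- `β` disables nothing in `B`, so `α` is already disabled at `q`; its NES at `q` still works
    -- at `q'` because a path from `q'` extends by `β ∉ B` to a path from `q`.
    have hdis' : α ∉ S.en q := fun h => hdis (hen ⟨h, hα⟩).1
    obtain ⟨E, hE, hEB⟩ := hD1 α hα hdis'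
    refine ⟨E, fun as qn hpath _ hqn => ?_, hEB⟩
    obtain ⟨γ, hγE, hγ⟩ := hE (β :: as) qn ⟨q', hstep, hpath⟩ hdis' hqn
    rcases List.mem_cons.1 hγ with rfl | hγ
    · exact absurd (hEB hγE) hβ
    · exact ⟨γ, hγE, hγ⟩
  · by_cases hq : α ∈ S.en q
    · exact hD2 α hα hq
    · -- Otherwise the one-step path `β` enables `α`, so `β` lies in an NES contained in `B`.
      obtain ⟨E, hE, hEB⟩ := hD1 α hα hq
      obtain ⟨γ, hγE, hγ⟩ := hE [β] q' ⟨q', hstep, rfl⟩ hq hαen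
      obtain rfl := List.mem_singleton.1 hγ
      exact absurd (hEB hγE) hβ

end TRF
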